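/- Walk-to-path lemma in the lifted dependency graph: let G = (V, E_d, E_bi) be a DMG with lifted dependency graph G̃, let a, b ∈ V and C ⊆ V \ {a}. If there exists a walk from a_0 to b_1 in G̃ that is σ-open given C_0 ∪ (C_1 \ {b_1}), then there exists a path from a_0 to b_1 in G̃ that is σ-open given C_0 ∪ (C_1 \ {b_1}) and consists only of edges occurring on the given walk. -/

import Mathlib

namespace ESepPaper

/-- A directed mixed graph: directed edges and bidirected edges over a node type `V`.
A directed graph (DG) is a DMG with `Ebi = ∅`. -/
structure DMG (V : Type) where
  Ed : Set (V × V)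
  Ebi : Set (Sym2 V)

variable {V : Type}

/-- `G.ancestor u v` : there is a directed path `u → … → v` (possibly trivial). -/
def DMG.ancestor (G : DMG V) : V → V → Prop :=
  Relation.ReflTransGen (fun u v => (u, v) ∈ G.Ed)

/-- Ancestors of a set `C`. -/
def DMG.anc (G : DMG V) (C : Set V) : Set V := {u | ∃ v ∈ C, G.ancestor u v}

/-- Strongly connected component of `v`. -/
def DMG.scc (G : DMG V) (v : V) : Set V := {w | G.ancestor w v ∧ G.ancestor v w}

/-- Parents of a set of nodes. -/
def DMG.pa (G : DMG V) (S : Set V) : Set V := {w | ∃ v ∈ S, (w, v) ∈ G.Ed}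

/-- Kind of a traversed edge on a walk: forward directed, backward directed, or bidirected. -/
inductive LinkType | fwd | bwd | bi
deriving DecidableEq

/-- Validity of a link of kind `t` between consecutive walk nodes `u` and `v`. -/
def DMG.linkOK (G : DMG V) (u v : V) : LinkType → Prop
  | .fwd => (u, v) ∈ G.Ed
  | .bwd => (v, u) ∈ G.Ed
  | .bi => s(u, v) ∈ G.Ebi

/-- Arrowhead at the second (right) endpoint of the link. -/
def LinkType.headR : LinkType → Prop
  | .fwd => True
  | .bwd => False
  | .bi => True

/-- Arrowhead at the first (left) endpoint of the link. -/
def LinkType.headL : LinkType → Prop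
  | .fwd => False
  | .bwd => True
  | .bi => True

/-- Tail at the second (right) endpoint. -/
def LinkType.tailR (t : LinkType) : Prop := t = .bwd

/-- Tail at the first (left) endpoint. -/
def LinkType.tailL (t : LinkType) : Prop := t = .fwd

/-- Walks in a DMG. -/
inductive DMG.Walk (G : DMG V) : V → V → Type
  | nil (v : V) : DMG.Walk G v v
  | cons {u v w : V} (t : LinkType) (h : G.linkOK u v t) (p : DMG.Walk G v w) : DMG.Walk G u w

/-- An interior node on a walk, whose incoming link is `t1` and outgoing link is `t2`,
is a collider iff both links have an arrowhead at it. -/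
def colliderAt (t1 t2 : LinkType) : Prop := t1.headR ∧ t2.headL

/-- An interior non-collider `v` between neighbours `u` (incoming link `t1`) and `w`
(outgoing link `t2`) is unblockable: on every side where the link has a tail at `v`, the
corresponding neighbour lies in `scc_G(v)` (left-chain/right-chain/fork cases). -/
def unblockableAt (G : DMG V) (u v w : V) (t1 t2 : LinkType) : Prop :=
  (t1.tailR → u ∈ G.scc v) ∧ (t2.tailL → w ∈ G.scc v)

namespace DMG.Walk

variable {G : DMG V}

/-- First node of a walk. -/
def first {a b : V} (_ : G.Walk a b) : V := a

def length : {a b : V} → G.Walk a b → ℕ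
  | _, _, .nil _ => 0
  | _, _, .cons _ _ p => p.length + 1

def support : {a b : V} → G.Walk a b → List V
  | a, _, .nil _ => [a]
  | a, _, .cons _ _ p => a :: p.support

/-- Auxiliary: σ-openness of the remainder of a walk, where `u` is the previous node and
`t1` the link from `u` into the current first node. -/
def sigmaOpenAux (C : Set V) : (u : V) → LinkType → {b c : V} → G.Walk b c → Prop
  | _, _, _, _, .nil _ => True
  | u, t1, v, _, .cons t2 _ q =>
      ((colliderAt t1 t2 → v ∈ G.anc C) ∧
       (¬ colliderAt t1 t2 → ¬ unblockableAt G u v q.first t1 t2 → v ∉ C)) ∧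
      sigmaOpenAux C v t2 q

/-- The walk is σ-open given `C`: every collider on it is an ancestor of a node of `C`, and
no blockable non-collider on it lies in `C`. -/
def sigmaOpen (C : Set V) : {a b : V} → G.Walk a b → Prop
  | _, _, .nil _ => True
  | a, _, .cons t _ q => sigmaOpenAux C a t q

/-- All links are forward directed. -/
def IsDirected : {a b : V} → G.Walk a b → Prop
  | _, _, .nil _ => True
  | _, _, .cons t _ p => t = .fwd ∧ p.IsDirected

/-- Interior nodes of the walk (all nodes except the two endpoints). -/
def interior {a b : V} (p : G.Walk a b) : List V := p.support.tail.dropLast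

/-- Arrowhead at the first endpoint. -/
def headAtStart : {a b : V} → G.Walk a b → Prop
  | _, _, .nil _ => False
  | _, _, .cons t _ _ => t.headL

def headAtEndAux : LinkType → {a b : V} → G.Walk a b → Prop
  | t, _, _, .nil _ => t.headR
  | _, _, _, .cons t _ q => headAtEndAux t q

/-- Arrowhead at the last endpoint. -/
def headAtEnd : {a b : V} → G.Walk a b → Prop
  | _, _, .nil _ => False
  | _, _, .cons t _ q => headAtEndAux t q

def noCollidersAux : LinkType → {a b : V} → G.Walk a b → Prop
  | _, _, _, .nil _ => True
  | t1, _, _, .cons t2 _ q => ¬ colliderAt t1 t2 ∧ noCollidersAux t2 q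

/-- There is no collider on the walk. -/
def NoColliders : {a b : V} → G.Walk a b → Prop
  | _, _, .nil _ => True
  | _, _, .cons t _ q => noCollidersAux t q

def collidersInAux (S : Set V) : LinkType → {a b : V} → G.Walk a b → Prop
  | _, _, _, .nil _ => True
  | t1, v, _, .cons t2 _ q => (colliderAt t1 t2 → v ∈ S) ∧ collidersInAux S t2 q

/-- Every collider on the walk lies in `S`. -/
def CollidersIn (S : Set V) : {a b : V} → G.Walk a b → Prop
  | _, _, .nil _ => True
  | _, _, .cons t _ q => collidersInAux S t q

def noncollUnblAux : (u : V) → LinkType → {b c : V} → G.Walk b c → Prop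
  | _, _, _, _, .nil _ => True
  | u, t1, v, _, .cons t2 _ q =>
      (¬ colliderAt t1 t2 → unblockableAt G u v q.first t1 t2) ∧ noncollUnblAux v t2 q

/-- Every interior non-collider on the walk is unblockable. -/
def NoncollidersUnblockable : {a b : V} → G.Walk a b → Prop
  | _, _, .nil _ => True
  | a, _, .cons t _ q => noncollUnblAux a t q

/-- The set of edges occurring on a walk (directed edges as ordered pairs in `E_d`,
bidirected edges as unordered pairs). -/
def edges : {a b : V} → G.Walk a b → Set ((V × V) ⊕ Sym2 V)
  | _, _, .nil _ => ∅
  | a, _, .cons t _ p =>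
      insert (match t with
        | .fwd => Sum.inl (a, p.first)
        | .bwd => Sum.inl (p.first, a)
        | .bi => Sum.inr s(a, p.first)) p.edges

/-- Concatenation of walks. -/
def append : {a b c : V} → G.Walk a b → G.Walk b c → G.Walk a c
  | _, _, _, .nil _, q => q
  | _, _, _, .cons t h p, q => .cons t h (p.append q)

/-- A walk `v_0, …, v_{n+1}` is a path if no node besides the final endpoint occurs more
than once, i.e. `v_0, …, v_n` are pairwise distinct. -/
def IsPath {a b : V} (p : G.Walk a b) : Prop := p.support.dropLast.Nodup

end DMG.Walk

/-- `A` is σ-separated from `B` given `C` in `G`: every walk from a node of `A` to a node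
of `B` is σ-blocked given `C`. -/
def DMG.sigmaSep (G : DMG V) (A B C : Set V) : Prop :=
  ∀ a ∈ A, ∀ b ∈ B, ∀ p : G.Walk a b, ¬ p.sigmaOpen C

/-- The lifted dependency graph of `G`, on two copies of `V`
(`Sum.inl` is the past copy `V_0`, `Sum.inr` the future copy `V_1`). -/
def DMG.lift (G : DMG V) : DMG (V ⊕ V) where
  Ed := {e | ∃ u v, (u, v) ∈ G.Ed ∧
        (e = (Sum.inl u, Sum.inl v) ∨ e = (Sum.inl u, Sum.inr v) ∨
         e = (Sum.inr u, Sum.inr v))}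
  Ebi := {e | ∃ u v, s(u, v) ∈ G.Ebi ∧
        (e = s(Sum.inl u, Sum.inl v) ∨ e = s(Sum.inl u, Sum.inr v) ∨
         e = s(Sum.inr u, Sum.inl v) ∨ e = s(Sum.inr u, Sum.inr v))}

/-- `B` is E-separated from `A` given `C` in `G`:
`A_0` is σ-separated from `B_1` given `C_0 ∪ (C_1 \ B_1)` in the lifted dependency graph. -/
def DMG.ESep (G : DMG V) (A B C : Set V) : Prop :=
  G.lift.sigmaSep (Sum.inl '' A) (Sum.inr '' B)
    ((Sum.inl '' C) ∪ ((Sum.inr '' C) \ (Sum.inr '' B)))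

/-- The independence model `I_E^G` of E-separation triples. -/
def DMG.IE (G : DMG V) : Set (Set V × Set V × Set V) :=
  {t | G.ESep t.1 t.2.1 t.2.2}


/-- The latent projection of `G` onto the observed nodes `O`: a directed edge when there is
a non-trivial directed walk whose interior nodes are all latent, and a bidirected edge when
there is a non-trivial collider-free walk with arrowheads at both endpoints whose interior
nodes are all latent. -/
def DMG.latentProj (G : DMG V) (O : Set V) : DMG O where
  Ed := {e | ∃ p : G.Walk e.1.val e.2.val,
          p.IsDirected ∧ 0 < p.length ∧ ∀ x ∈ p.interior, x ∉ O}
  Ebi := {e | ∃ u v : O, e = s(u, v) ∧ ∃ p : G.Walk u.val v.val,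
          p.headAtStart ∧ p.headAtEnd ∧ p.NoColliders ∧ 0 < p.length ∧
          ∀ x ∈ p.interior, x ∉ O}

/-- The last edge of the walk `p` before entering `scc_G(w)` has an arrowhead at its
endpoint in `scc_G(w)` (vacuous if the walk never leaves `scc_G(w)`). -/
def DMG.lastEdgeInto (G : DMG V) {a b : V} (w : V) (p : G.Walk a b) : Prop :=
  (∀ x ∈ p.support, x ∈ G.scc w) ∨
  ∃ (x y : V) (t : LinkType) (h : G.linkOK x y t) (p₁ : G.Walk a x) (p₂ : G.Walk y b),
    p = p₁.append (.cons t h p₂) ∧ x ∉ G.scc w ∧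
    (∀ z ∈ p₂.support, z ∈ G.scc w) ∧ t.headR

/-- An (asymmetric) inducing path from `v` to `w`: a non-trivial path such that every
collider on it is an ancestor of `v` or `w`, every interior non-collider is unblockable,
and the last edge before entering `scc_G(w)` points into `scc_G(w)`. -/
def DMG.IsInducingPath (G : DMG V) {v w : V} (p : G.Walk v w) : Prop :=
  0 < p.length ∧ p.IsPath ∧
  p.CollidersIn (G.anc {v, w}) ∧ p.NoncollidersUnblockable ∧ G.lastEdgeInto w p

/-!
Cut closed subwalks out of the walk, from its end towards its start. Suppose the walk visits `v`
twice, and the part between the two visits is removed. Both links that remain at `v` were there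
before, so if `v` lies in the conditioning set then every tail at `v` still leads into its strongly
connected component. If `v` newly becomes a collider, the removed part starts with `v →` and does
not return to `v` by an arrowhead. Its edges therefore cannot all point forward, and the first node
at which they stop doing so is a collider that descends from `v`. As that collider is an ancestor of
the conditioning set, so is `v`.
-/

theorem LinkType.headL_or_tailL : ∀ t : LinkType, t.headL ∨ t.tailL
  | .fwd => .inr rfl
  | .bwd => .inl trivial
  | .bi => .inl trivial

theorem LinkType.tailL.headR {t : LinkType} (ht : t.tailL) : t.headR := by
  subst ht
  trivial

theorem unblockableAt_of_colliderAt {G : DMG V} {u v w : V} {t₁ t₂ : LinkType}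
    (h : colliderAt t₁ t₂) : unblockableAt G u v w t₁ t₂ := by
  refine ⟨fun ht => ?_, fun ht => ?_⟩ <;> subst ht
  exacts [h.1.elim, h.2.elim]

namespace DMG

variable {G : DMG V} {C : Set V}

theorem mem_anc_of_linkOK_of_tailL {u v : V} {t : LinkType} (h : G.linkOK u v t) (ht : t.tailL)
    (hv : v ∈ G.anc C) : u ∈ G.anc C := by
  subst ht
  obtain ⟨c, hc, hvc⟩ := hv
  exact ⟨c, hc, .head h hvc⟩

/-- The condition that σ-openness given `C` imposes on an interior node `v` between `u` (incoming
link `t₁`) and `w` (outgoing link `t₂`). As colliders satisfy `unblockableAt` vacuously, the second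
half need not be restricted to non-colliders. -/
def sigmaOpenAt (G : DMG V) (C : Set V) (u v w : V) (t₁ t₂ : LinkType) : Prop :=
  (colliderAt t₁ t₂ → v ∈ G.anc C) ∧ (v ∈ C → unblockableAt G u v w t₁ t₂)

theorem sigmaOpenAt.splice {u v w x y : V} {t₁ t₂ t₃ t₄ : LinkType}
    (hfst : G.sigmaOpenAt C u v w t₁ t₂) (hsnd : G.sigmaOpenAt C x v y t₃ t₄)
    (hmid : t₂.tailL → t₃.headR ∨ v ∈ G.anc C) : G.sigmaOpenAt C u v y t₁ t₄ := by
  refine ⟨fun ⟨ht₁, ht₄⟩ => ?_, fun hv => ⟨(hfst.2 hv).1, (hsnd.2 hv).2⟩⟩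
  rcases t₂.headL_or_tailL with ht₂ | ht₂
  · exact hfst.1 ⟨ht₁, ht₂⟩
  · exact (hmid ht₂).elim (fun ht₃ => hsnd.1 ⟨ht₃, ht₄⟩) id

namespace Walk

theorem sigmaOpenAux_cons {u v w b : V} {t₁ t₂ : LinkType} {h : G.linkOK v w t₂}
    {q : G.Walk w b} :
    (cons t₂ h q).sigmaOpenAux C u t₁ ↔
      G.sigmaOpenAt C u v w t₁ t₂ ∧ q.sigmaOpenAux C v t₂ := by
  have hcol : colliderAt t₁ t₂ → unblockableAt G u v w t₁ t₂ := unblockableAt_of_colliderAt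
  simp only [sigmaOpenAux, sigmaOpenAt, first]
  tauto

theorem sigmaOpen_of_sigmaOpenAux {u a b : V} {t : LinkType} {p : G.Walk a b}
    (hp : p.sigmaOpenAux C u t) : p.sigmaOpen C := by
  cases p with
  | nil => trivial
  | cons => exact hp.2

theorem exists_suffix_sigmaOpenAux {v w b : V} (r : G.Walk w b) (hv : v ∈ r.support) :
    ∀ {u : V} {t : LinkType}, G.linkOK u w t → r.sigmaOpenAux C u t →
      ∃ (s : G.Walk v b) (x : V) (t' : LinkType),
        s.support <:+ r.support ∧ s.edges ⊆ r.edges ∧ s.sigmaOpenAux C x t' ∧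
          (t.tailL → t'.headR ∨ u ∈ G.anc C) := by
  induction r with
  | nil w =>
    intro u t _ hr
    obtain rfl := List.mem_singleton.mp hv
    exact ⟨_, u, t, List.suffix_rfl, subset_rfl, hr, fun ht => .inl ht.headR⟩
  | @cons w _ _ t₂ h₂ r ih =>
    intro u t h hr
    rcases List.mem_cons.mp hv with rfl | hv
    · exact ⟨_, u, t, List.suffix_rfl, subset_rfl, hr, fun ht => .inl ht.headR⟩
    obtain ⟨hw, hr⟩ := sigmaOpenAux_cons.mp hr
    obtain ⟨s, x, t', hsupp, hedges, hs, hreturn⟩ := ih hv h₂ hr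
    refine ⟨s, x, t', hsupp.trans (List.suffix_cons _ _),
      hedges.trans (Set.subset_insert _ _), hs, fun ht => ?_⟩
    have hw_or : t'.headR ∨ w ∈ G.anc C :=
      t₂.headL_or_tailL.elim (fun ht₂ => .inr (hw.1 ⟨ht.headR, ht₂⟩)) hreturn
    exact hw_or.imp_right (mem_anc_of_linkOK_of_tailL h ht)

theorem exists_suffix_bypassing_cycle {v w b : V} {t : LinkType} (h : G.linkOK v w t)
    {r : G.Walk w b} (hr : r.sigmaOpenAux C v t) (hv : v ∈ r.support) :
    ∃ s : G.Walk v b, s.support <:+ r.support ∧ s.edges ⊆ r.edges ∧ s.sigmaOpen C ∧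
      ∀ u t₁, (cons t h r).sigmaOpenAux C u t₁ → s.sigmaOpenAux C u t₁ := by
  obtain ⟨s, x, t', hsupp, hedges, hs, hreturn⟩ := exists_suffix_sigmaOpenAux r hv h hr
  refine ⟨s, hsupp, hedges, sigmaOpen_of_sigmaOpenAux hs, fun u t₁ hu => ?_⟩
  cases s with
  | nil => trivial
  | cons =>
    obtain ⟨hsnd, htail⟩ := sigmaOpenAux_cons.mp hs
    exact sigmaOpenAux_cons.mpr ⟨(sigmaOpenAux_cons.mp hu).1.splice hsnd hreturn, htail⟩

-- The last conjunct lets the induction prepend a link: by itself, `q.sigmaOpen C` says nothing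
-- about the first node of `q`.
theorem exists_nodup_sigmaOpen {a b : V} (p : G.Walk a b) (hp : p.sigmaOpen C) :
    ∃ q : G.Walk a b, q.support.Nodup ∧ q.edges ⊆ p.edges ∧ q.sigmaOpen C ∧
      ∀ u t, p.sigmaOpenAux C u t → q.sigmaOpenAux C u t := by
  induction p with
  | nil a => exact ⟨nil a, List.nodup_singleton a, subset_rfl, hp, fun _ _ => id⟩
  | @cons a _ _ t h r ih =>
    obtain ⟨r', hnodup, hedges, -, hr'⟩ := ih (sigmaOpen_of_sigmaOpenAux hp)
    have hopen : r'.sigmaOpenAux C a t := hr' a t hp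
    have hcons (u t₁) (hu : (cons t h r).sigmaOpenAux C u t₁) :
        (cons t h r').sigmaOpenAux C u t₁ :=
      sigmaOpenAux_cons.mpr ⟨(sigmaOpenAux_cons.mp hu).1, hopen⟩
    by_cases ha : a ∈ r'.support
    · obtain ⟨s, hsupp, hsub, hs, htransfer⟩ := exists_suffix_bypassing_cycle h hopen ha
      exact ⟨s, hnodup.sublist hsupp.sublist, (hsub.trans hedges).trans (Set.subset_insert _ _),
        hs, fun u t₁ hu => htransfer u t₁ (hcons u t₁ hu)⟩
    · exact ⟨cons t h r', List.nodup_cons.mpr ⟨ha, hnodup⟩, Set.insert_subset_insert hedges,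
        hopen, hcons⟩

end Walk

end DMG

theorem walk_to_path_general {G : DMG V} {C : Set V} {a b : V} (p : G.Walk a b)
    (hp : p.sigmaOpen C) :
    ∃ q : G.Walk a b, q.sigmaOpen C ∧ q.support.Nodup ∧ q.edges ⊆ p.edges := by
  obtain ⟨q, hnodup, hedges, hq, -⟩ := p.exists_nodup_sigmaOpen hp
  exact ⟨q, hq, hnodup, hedges⟩

/-- Walk-to-path lemma in the lifted dependency graph: a σ-open walk from `a₀` to `b₁`
given `C₀ ∪ (C₁ \ {b₁})` can be turned into a σ-open path consisting of edges of the
original walk. -/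
theorem walk_to_path {V : Type} [Fintype V] (G : DMG V) (a b : V) (C : Set V)
    (hC : a ∉ C)
    (p : G.lift.Walk (Sum.inl a) (Sum.inr b))
    (hp : p.sigmaOpen ((Sum.inl '' C) ∪ ((Sum.inr '' C) \ {Sum.inr b}))) :
    ∃ q : G.lift.Walk (Sum.inl a) (Sum.inr b),
      q.sigmaOpen ((Sum.inl '' C) ∪ ((Sum.inr '' C) \ {Sum.inr b})) ∧
      q.IsPath ∧ q.edges ⊆ p.edges := by
  obtain ⟨q, hq, hnodup, hedges⟩ := walk_to_path_general p hp
  exact ⟨q, hq, hnodup.sublist (List.dropLast_sublist _), hedges⟩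

end ESepPaper
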